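/- arXiv:0807.0805 — 2 statements merged into one kernel-verified Lean document; each statement's English description precedes it below -/
import Mathlib

section
/- Let V be a real vector space, J : V → V a linear map with J ∘ J = −id_V, C ⊆ V a linear subspace, and J_Y : C → C a linear map with J_Y ∘ J_Y = −id_C. Then the set H := { v − J(J_Y v) : v ∈ C } is a linear subspace of V which is invariant under J (i.e. J(H) = H). Moreover, if C is J-invariant and J_Y coincides with the restriction of J to C, then H = C. -/
/-!
The subspace `H` is the range of the linear map `φ v = v - J (JY v)` on `C`. From `J² = -1` and
`JY² = -1` one gets `J (φ v) = J v + JY v = φ (JY v)`, so `J` preserves the range of `φ`, and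
`φ v = J (φ (-JY v))` shows that it maps onto it. If `JY` is the restriction of `J`, then
`φ v = 2 v`, whose range is `C`.
-/

/-- Let `V` be a real vector space, `J : V → V` linear with `J ∘ J = -id`,
`C ⊆ V` a subspace, and `J_Y : C → C` linear with `J_Y ∘ J_Y = -id`.  Then
`H = { v - J (J_Y v) : v ∈ C }` is a linear subspace of `V` invariant under `J`
(`J(H) = H`); moreover, if `C` is `J`-invariant and `J_Y` is the restriction of
`J` to `C`, then `H = C`. -/
theorem horizontal_subspace_complex_invariant
    (V : Type*) [AddCommGroup V] [Module ℝ V]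
    (J : V →ₗ[ℝ] V) (hJ : ∀ v : V, J (J v) = -v)
    (C : Submodule ℝ V)
    (JY : C →ₗ[ℝ] C) (hJY : ∀ v : C, JY (JY v) = -v) :
    ∃ H : Submodule ℝ V,
      (H : Set V) = {w : V | ∃ v : C, w = (v : V) - J ((JY v : V))} ∧
      Submodule.map J H = H ∧
      ((∀ v : C, J (v : V) ∈ C) → (∀ v : C, ((JY v : V)) = J (v : V)) → H = C) := by
  let φ : C →ₗ[ℝ] V := C.subtype - J ∘ₗ C.subtype ∘ₗ JY
  have hφ : ∀ v : C, φ v = (v : V) - J (JY v : V) := fun v => rfl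
  have hcomm : ∀ v : C, J (φ v) = φ (JY v) := by
    intro v
    rw [hφ, hφ, hJY, map_sub, hJ, Submodule.coe_neg, map_neg]
    abel
  refine ⟨LinearMap.range φ, ?_, ?_, ?_⟩
  · ext w
    simp only [SetLike.mem_coe, LinearMap.mem_range, Set.mem_ofPred_eq, hφ, eq_comm]
  · apply le_antisymm
    · rintro _ ⟨_, ⟨v, rfl⟩, rfl⟩
      exact ⟨JY v, (hcomm v).symm⟩
    · rintro _ ⟨v, rfl⟩
      exact ⟨φ (-JY v), ⟨_, rfl⟩, by rw [hcomm, map_neg, hJY, neg_neg]⟩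
  · intro _ hres
    have h2 : ∀ v : C, φ v = (2 : ℝ) • (v : V) := by
      intro v
      rw [hφ, hres, hJ, two_smul, sub_neg_eq_add]
    apply le_antisymm
    · rintro _ ⟨v, rfl⟩
      rw [h2]
      exact C.smul_mem _ v.2
    · intro w hw
      refine ⟨(2 : ℝ)⁻¹ • ⟨w, hw⟩, ?_⟩
      rw [h2, Submodule.coe_smul, smul_inv_smul₀ two_ne_zero]
end

section
/- Let V be a finite-dimensional real normed vector space equipped with a linear complex structure J_h : V → V (J_h ∘ J_h = −id), and let W be a finite-dimensional complex normed vector space with complex scalar multiplication by i. Let J : W → End_ℝ(V × W) be a map that is differentiable at 0 and satisfies J(w) ∘ J(w) = −id for every w ∈ W, with J(0)(v, w') = (J_h v, i·w'). For u ∈ W, define B_u : V → W by B_u v = pr_W( (DJ(0)(u)) (v, 0) ), where DJ(0) is the derivative of J at 0 and pr_W is the projection V × W → W. Then: (i) B_u(J_h v) = −i·B_u(v) for all v ∈ V (B_u is complex antilinear), and (ii) the real-linear endomorphism J̃_u of V × W given by J̃_u(v, w') = (J_h v, B_u v + i·w') satisfies J̃_u ∘ J̃_u = −id. -/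
open Complex

/-!
Differentiating `J(w)² = -id` at `w = 0` in the direction `u` gives
`J(0) ∘ DJ(0)(u) + DJ(0)(u) ∘ J(0) = 0`. Since `J(0)` is block diagonal with blocks `J_h` and `i`,
the `V → W` block of this identity reads `i B_u + B_u J_h = 0`, which is antilinearity of `B_u`.
The only off-diagonal block of `J̃_u²` is `B_u J_h + i B_u`, so `J̃_u² = -id` follows.
-/

/-- Linear-algebra core of the rescaling limit in the proof of Proposition 3.2:
if `J : W → End_ℝ(V × W)` is differentiable at `0`, satisfies `J(w)² = -id` for all `w`,
and `J(0)(v, w') = (J_h v, i w')`, then the normal derivative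
`B_u v = pr_W (DJ(0)(u)(v, 0))` is complex antilinear in the sense
`B_u (J_h v) = - i • B_u v`, and the limit structure
`J̃_u (v, w') = (J_h v, B_u v + i w')` squares to `-id`. -/
theorem rescaled_limit_is_almost_complex
    (V W : Type*)
    [NormedAddCommGroup V] [NormedSpace ℝ V] [FiniteDimensional ℝ V]
    [NormedAddCommGroup W] [NormedSpace ℂ W] [FiniteDimensional ℂ W]
    (Jh : V →L[ℝ] V) (hJh : ∀ v : V, Jh (Jh v) = -v)
    (J : W → ((V × W) →L[ℝ] (V × W)))
    (hdiff : DifferentiableAt ℝ J 0)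
    (hsq : ∀ w : W, ∀ p : V × W, J w (J w p) = -p)
    (h0 : ∀ (v : V) (w' : W), J 0 (v, w') = (Jh v, (Complex.I : ℂ) • w'))
    (B : W → V → W)
    (hB : ∀ (u : W) (v : V), B u v = (fderiv ℝ J 0 u (v, 0)).2) :
    (∀ (u : W) (v : V), B u (Jh v) = -((Complex.I : ℂ) • B u v)) ∧
    (∀ (u : W) (v : V) (w' : W),
      (fun p : V × W => (Jh p.1, B u p.1 + (Complex.I : ℂ) • p.2))
        ((fun p : V × W => (Jh p.1, B u p.1 + (Complex.I : ℂ) • p.2)) (v, w'))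
      = -(v, w')) := by
  have anti : ∀ (u : W) (v : V), B u (Jh v) = -((Complex.I : ℂ) • B u v) := by
    intro u v
    have hJ : HasFDerivAt J (fderiv ℝ J 0) 0 := hdiff.hasFDerivAt
    have hcomp := hJ.clm_comp hJ
    have hconst : (fun w => (J w).comp (J w)) =
        fun _ : W => -ContinuousLinearMap.id ℝ (V × W) := by
      funext w
      exact ContinuousLinearMap.ext (hsq w)
    rw [hconst] at hcomp
    have hzero := hcomp.unique (hasFDerivAt_const _ _)
    -- The `W`-component at `(v, 0)` of `J(0) ∘ DJ(0)(u) + DJ(0)(u) ∘ J(0) = 0`.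
    have hW := congrArg Prod.snd (DFunLike.congr_fun (DFunLike.congr_fun hzero u) (v, (0 : W)))
    simp [h0] at hW
    rw [hB, hB]
    exact eq_neg_of_add_eq_zero_right hW
  refine ⟨anti, fun u v w' => ?_⟩
  ext
  · simp [hJh]
  · simp [anti, smul_smul]
end
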